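/- arXiv:2402.07064 — 2 statements merged into one kernel-verified Lean document; each statement's English description precedes it below -/
import Mathlib

section
/- Let Ω = {v ∈ ℝ^m : ∃ ξ ∈ ℝ^N, F_0 + Σ_{i=1}^m v_i F_i + Σ_{t=1}^N ξ_t M_t ⪰ 0} for symmetric ν×ν real matrices F_0,…,F_m, M_1,…,M_N, and let g_ℓ^k, ℓ=1,…,L, k=1,…,r, be SOS-convex polynomials on ℝ^m. Assume Ω is compact and there exist v̄ ∈ ℝ^m and ξ̄ ∈ ℝ^N with F_0 + Σ_i v̄_i F_i + Σ_t ξ̄_t M_t ≻ 0 (positive definite). Then the following are equivalent: (i) min_{k=1,…,r} max_{ℓ=1,…,L} g_ℓ^k(v) ≥ 0 for all v ∈ Ω; (ii) for each k=1,…,r there exist a positive semi-definite ν×ν matrix Z_k and δ^k = (δ_1^k,…,δ_L^k) in the simplex Δ = {δ ∈ ℝ_+^L : Σ_ℓ δ_ℓ = 1} such that Σ_{ℓ=1}^L δ_ℓ^k g_ℓ^k(v) − tr(Z_k F_0) − Σ_{i=1}^m v_i tr(Z_k F_i) is an SOS polynomial of degree at most d, and tr(Z_k M_t) = 0 for all t=1,…,N,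 where d is the smallest even integer larger than max_{k,ℓ} deg g_ℓ^k. -/
open MvPolynomial Matrix
open scoped BigOperators

noncomputable section

def IsSOS {m : ℕ} (p : MvPolynomial (Fin m) ℝ) : Prop :=
  ∃ (J : ℕ) (f : Fin J → MvPolynomial (Fin m) ℝ), p = ∑ j, (f j) ^ 2

/-- SOS polynomial of degree at most `d` (membership in `Σ_d^2(v)`). -/
def IsSOSDeg {m : ℕ} (d : ℕ) (p : MvPolynomial (Fin m) ℝ) : Prop :=
  IsSOS p ∧ p.totalDegree ≤ d

def polyHessian {m : ℕ} (f : MvPolynomial (Fin m) ℝ) :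
    Matrix (Fin m) (Fin m) (MvPolynomial (Fin m) ℝ) :=
  Matrix.of fun i j => pderiv i (pderiv j f)

def IsSOSConvex {m : ℕ} (f : MvPolynomial (Fin m) ℝ) : Prop :=
  ∃ (s : ℕ) (P : Matrix (Fin s) (Fin m) (MvPolynomial (Fin m) ℝ)),
    polyHessian f = Pᵀ * P

/-- The projected spectrahedron
`Ω = {v : ∃ ξ, F₀ + Σᵢ vᵢ Fᵢ + Σₜ ξₜ Mₜ ⪰ 0}`. -/
def projSpec {m N ν : ℕ} (F0 : Matrix (Fin ν) (Fin ν) ℝ)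
    (F : Fin m → Matrix (Fin ν) (Fin ν) ℝ)
    (M : Fin N → Matrix (Fin ν) (Fin ν) ℝ) : Set (Fin m → ℝ) :=
  {v | ∃ ξ : Fin N → ℝ, (F0 + ∑ i, v i • F i + ∑ t, ξ t • M t).PosSemidef}

/-- The piecewise function `v ↦ min_{k} max_{ℓ} g_ℓ^k(v)`. -/
def pwMinMax {m r L : ℕ} [NeZero r] [NeZero L]
    (g : Fin r → Fin L → MvPolynomial (Fin m) ℝ) (v : Fin m → ℝ) : ℝ :=
  Finset.univ.inf' Finset.univ_nonempty fun k =>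
    Finset.univ.sup' Finset.univ_nonempty fun ℓ => eval v (g k ℓ)

/-!
For an SOS-convex polynomial `p`, the remainder `∫₀¹ (1 - s) (d²/ds²) p (a + s (v - a)) ds` of the
first order Taylor formula at any point `a` is a sum of squares in `v`: the integrand is a weighted
sum of squares, and the moment matrices of the weight `1 - s` are positive semidefinite.

If `max_ℓ g_ℓ` is nonnegative on `Ω`, convex separation gives multipliers `Z ⪰ 0` and `δ ∈ Δ` whose
Lagrangian is a nonnegative SOS-convex polynomial. A convex polynomial that is bounded below attains
its minimum, because modulo the directions in which it is constant its sublevel sets are compact.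
At a minimizer the gradient vanishes, so there the Taylor formula writes the Lagrangian as a
nonnegative constant plus a sum of squares.
-/

section TaylorIntegral

variable {A : Type*} [CommRing A] [Algebra ℝ A]

lemma posSemidef_momentMatrix {a b : ℝ} (hab : a ≤ b) {w : ℝ → ℝ}
    (hw : IntervalIntegrable w MeasureTheory.volume a b) (hw_nonneg : ∀ s ∈ Set.Icc a b, 0 ≤ w s)
    (D : ℕ) :
    (Matrix.of fun k l : Fin D => ∫ s in a..b, w s * s ^ (k + l : ℕ)).PosSemidef := by
  refine .of_dotProduct_mulVec_nonneg ?_ fun x => ?_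
  · ext k l
    simp [add_comm (k : ℕ)]
  have expand (s : ℝ) : w s * (∑ k : Fin D, x k * s ^ (k : ℕ)) ^ 2
      = ∑ k : Fin D, ∑ l : Fin D, x k * x l * (w s * s ^ (k + l : ℕ)) := by
    rw [sq, Finset.sum_mul_sum, Finset.mul_sum]
    refine Finset.sum_congr rfl fun k _ => ?_
    rw [Finset.mul_sum]
    exact Finset.sum_congr rfl fun l _ => by ring
  have integrable (c : ℝ) (n : ℕ) :
      IntervalIntegrable (fun s => c * (w s * s ^ n)) MeasureTheory.volume a b :=
    (hw.mul_continuousOn (by fun_prop)).const_mul c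
  have integrable_sum (k : Fin D) : IntervalIntegrable
      (fun s => ∑ l : Fin D, x k * x l * (w s * s ^ (k + l : ℕ))) MeasureTheory.volume a b := by
    simpa only [Finset.sum_fn] using IntervalIntegrable.sum Finset.univ fun l _ =>
      integrable (x k * x l) (k + l)
  have quadForm_eq : ∫ s in a..b, w s * (∑ k : Fin D, x k * s ^ (k : ℕ)) ^ 2
      = star x ⬝ᵥ (Matrix.of fun k l : Fin D => ∫ s in a..b, w s * s ^ (k + l : ℕ)) *ᵥ x := by
    simp_rw [expand]
    rw [intervalIntegral.integral_finsetSum fun k _ => integrable_sum k]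
    simp only [dotProduct, mulVec, star_trivial, Matrix.of_apply, Finset.mul_sum]
    refine Finset.sum_congr rfl fun k _ => ?_
    rw [intervalIntegral.integral_finsetSum fun l _ => integrable _ _]
    refine Finset.sum_congr rfl fun l _ => ?_
    rw [intervalIntegral.integral_const_mul]
    ring
  rw [← quadForm_eq]
  exact intervalIntegral.integral_nonneg hab fun s hs => mul_nonneg (hw_nonneg s hs) (sq_nonneg _)

open scoped MatrixOrder in
lemma isSumSq_of_posSemidef {n : Type*} [Fintype n] {c : Matrix n n ℝ} (hc : c.PosSemidef)
    (f : n → A) : IsSumSq (∑ k, ∑ l, c k l • (f k * f l)) := by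
  classical
  obtain ⟨B, rfl⟩ := CStarAlgebra.nonneg_iff_eq_star_mul_self.mp hc.nonneg
  have sum_sq_eq : ∑ k, ∑ l, (star B * B) k l • (f k * f l)
      = ∑ i, (∑ k, B i k • f k) * ∑ l, B i l • f l := by
    simp only [Matrix.mul_apply, star_apply, star_trivial, Finset.sum_mul_sum, smul_mul_smul_comm,
      Finset.sum_smul]
    rw [Finset.sum_comm_cycle]
  rw [sum_sq_eq]
  exact IsSumSq.sum_mul_self _ _

lemma integral_one_sub_mul_pow (n : ℕ) :
    ∫ s in (0 : ℝ)..1, (1 - s) * s ^ n = (((n : ℝ) + 2) * (n + 1))⁻¹ := by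
  have expand (s : ℝ) : (1 - s) * s ^ n = s ^ n - s ^ (n + 1) := by ring
  simp_rw [expand]
  rw [intervalIntegral.integral_sub (by simp) (by simp), integral_pow, integral_pow]
  push_cast
  simp only [one_pow, ne_eq, Nat.add_eq_zero_iff, one_ne_zero, and_false, not_false_eq_true,
    zero_pow, sub_zero]
  field_simp
  ring

variable (A) in
/-- The integral `∫₀¹ (1 - s) φ(s) ds` of a polynomial `φ` with coefficients in a real algebra,
taken coefficientwise so that `A` needs no topology. It is the remainder in the first order Taylor
formula, see `taylorIntegral_derivative_derivative`. -/
def taylorIntegral : Polynomial A →ₗ[ℝ] A :=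
  Polynomial.lsum fun n => (∫ s in (0 : ℝ)..1, (1 - s) * s ^ n) • LinearMap.id

lemma taylorIntegral_monomial (n : ℕ) (a : A) :
    taylorIntegral A (Polynomial.monomial n a) = (∫ s in (0 : ℝ)..1, (1 - s) * s ^ n) • a := by
  simp [taylorIntegral, Polynomial.sum_monomial_index]

lemma taylorIntegral_derivative_derivative (φ : Polynomial A) :
    taylorIntegral A φ.derivative.derivative = φ.eval 1 - φ.eval 0 - φ.derivative.eval 0 := by
  induction φ using Polynomial.induction_on' with
  | add φ ψ hφ hψ =>
    simp only [map_add, hφ, hψ, Polynomial.eval_add]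
    ring
  | monomial n a =>
    rcases n with _ | _ | n
    · simp
    · simp
    · have hn : (((n : ℝ) + 2) * (n + 1))⁻¹ * ((n + 2) * (n + 1)) = 1 :=
        inv_mul_cancel₀ (by positivity)
      have natCast_mul : a * ((n + 1 + 1 : ℕ) : A) * ((n + 1 : ℕ) : A)
          = (((n : ℝ) + 2) * (n + 1)) • a := by
        simp only [Algebra.smul_def, map_mul, map_add, map_natCast, map_ofNat, map_one]
        push_cast
        ring
      simp only [Polynomial.derivative_monomial, Nat.add_sub_cancel, taylorIntegral_monomial,
        integral_one_sub_mul_pow, natCast_mul, smul_smul, hn, one_smul]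
      simp

lemma isSumSq_taylorIntegral_mul_self (φ : Polynomial A) :
    IsSumSq (taylorIntegral A (φ * φ)) := by
  have expand : φ * φ = ∑ k : Fin (φ.natDegree + 1), ∑ l : Fin (φ.natDegree + 1),
      Polynomial.monomial (k + l : ℕ) (φ.coeff k * φ.coeff l) := by
    conv_lhs => rw [φ.as_sum_range, Finset.sum_range, Finset.sum_mul_sum]
    simp only [Polynomial.monomial_mul_monomial]
  simp only [expand, map_sum, taylorIntegral_monomial]
  exact isSumSq_of_posSemidef
    (posSemidef_momentMatrix zero_le_one (w := fun s => 1 - s)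
      ((by fun_prop : Continuous _).intervalIntegrable _ _) (fun s hs => sub_nonneg.2 hs.2) _) _

lemma isSumSq_taylorIntegral {φ : Polynomial A} (hφ : IsSumSq φ) :
    IsSumSq (taylorIntegral A φ) := by
  induction hφ with
  | zero => simp
  | sq_add ψ _ ih =>
    rw [map_add]
    exact (isSumSq_taylorIntegral_mul_self ψ).add ih

end TaylorIntegral

section Line

variable {σ A : Type*} [CommRing A] [Algebra ℝ A]

/-- The restriction `t ↦ p (x + t u)` of a real polynomial `p` to the line through `x` with
direction `u`. The coordinates of `x` and `u` lie in a real algebra `A`, so that both real lines and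
the generic line through a point are covered. -/
def restrictLine (x u : σ → A) : MvPolynomial σ ℝ →ₐ[ℝ] Polynomial A :=
  aeval fun i => Polynomial.C (x i) + Polynomial.X * Polynomial.C (u i)

lemma eval_restrictLine (x u : σ → A) (t : A) (p : MvPolynomial σ ℝ) :
    (restrictLine x u p).eval t = aeval (fun i => x i + t * u i) p := by
  induction p using MvPolynomial.induction_on with
  | C c => simp [restrictLine, Polynomial.algebraMap_apply]
  | add p q hp hq => simp only [map_add, Polynomial.eval_add, hp, hq]
  | mul_X p i hp =>
    simp only [map_mul, Polynomial.eval_mul, hp]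
    simp [restrictLine, mul_comm t]

lemma eval_restrictLine_real (x u : σ → ℝ) (t : ℝ) (p : MvPolynomial σ ℝ) :
    (restrictLine x u p).eval t = eval (x + t • u) p := by
  rw [eval_restrictLine, aeval_eq_eval]
  rfl

lemma derivative_restrictLine [Fintype σ] (x u : σ → A) (p : MvPolynomial σ ℝ) :
    (restrictLine x u p).derivative = ∑ i, Polynomial.C (u i) * restrictLine x u (pderiv i p) := by
  classical
  induction p using MvPolynomial.induction_on with
  | C c => simp [restrictLine, Polynomial.algebraMap_apply]
  | add p q hp hq => simp only [map_add, hp, hq, mul_add, Finset.sum_add_distrib]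
  | mul_X p j hp =>
    have derivative_X : (restrictLine x u (X j)).derivative = Polynomial.C (u j) := by
      simp [restrictLine]
    simp only [map_mul, Polynomial.derivative_mul, hp, derivative_X, pderiv_mul, map_add,
      pderiv_X, mul_add, Finset.sum_add_distrib, Finset.sum_mul]
    congr 1
    · exact Finset.sum_congr rfl fun i _ => by ring
    · simp [Pi.single_apply, apply_ite, mul_comm]

end Line

section Taylor

variable {σ : Type*} [Fintype σ]

/-- The first order Taylor polynomial of `p` at the point `a`. -/
def tangentPolynomial (a : σ → ℝ) (p : MvPolynomial σ ℝ) : MvPolynomial σ ℝ :=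
  C (eval a p) + ∑ i, C (eval a (pderiv i p)) * (X i - C (a i))

lemma taylorIntegral_restrictLine (a : σ → ℝ) (p : MvPolynomial σ ℝ) :
    taylorIntegral _
        (restrictLine (fun i => C (a i)) (fun i => X i - C (a i)) p).derivative.derivative
      = p - tangentPolynomial a p := by
  have aeval_C (q : MvPolynomial σ ℝ) : aeval (fun i => C (a i) : σ → MvPolynomial σ ℝ) q
      = C (eval a q) :=
    aeval_algebraMap_apply (MvPolynomial σ ℝ) a q
  rw [taylorIntegral_derivative_derivative, derivative_restrictLine]
  simp only [Polynomial.eval_finsetSum, Polynomial.eval_mul, Polynomial.eval_C, eval_restrictLine,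
    one_mul, zero_mul, add_zero, add_sub_cancel, aeval_X_left_apply, aeval_C, tangentPolynomial]
  rw [sub_sub]
  simp only [mul_comm]

end Taylor

lemma isSOS_iff_isSumSq {m : ℕ} {p : MvPolynomial (Fin m) ℝ} : IsSOS p ↔ IsSumSq p := by
  constructor
  · rintro ⟨J, f, rfl⟩
    exact IsSumSq.sum_sq _ _
  · intro hp
    induction hp with
    | zero => exact ⟨0, 0, by simp⟩
    | sq_add q _ ih =>
      obtain ⟨J, f, rfl⟩ := ih
      exact ⟨J + 1, Fin.cons q f, by simp [Fin.sum_univ_succ, sq]⟩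

lemma IsSOS.eval_nonneg {m : ℕ} {p : MvPolynomial (Fin m) ℝ} (hp : IsSOS p) (v : Fin m → ℝ) :
    0 ≤ eval v p := by
  obtain ⟨J, f, rfl⟩ := hp
  simpa only [map_sum, map_pow] using Finset.sum_nonneg fun j _ => sq_nonneg (eval v (f j))

namespace IsSOSConvex

variable {m : ℕ} {p q : MvPolynomial (Fin m) ℝ}

lemma isSumSq_derivative_derivative_restrictLine {A : Type*} [CommRing A] [Algebra ℝ A]
    (hp : IsSOSConvex p) (x u : Fin m → A) :
    IsSumSq (restrictLine x u p).derivative.derivative := by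
  obtain ⟨s, P, hP⟩ := hp
  have hessian_apply (i j : Fin m) : pderiv i (pderiv j p) = ∑ a, P a i * P a j := by
    simpa only [polyHessian, Matrix.of_apply, Matrix.mul_apply, Matrix.transpose_apply] using
      congr_fun₂ hP i j
  have eq_sum_mul_self : (restrictLine x u p).derivative.derivative =
      ∑ a, (∑ i, Polynomial.C (u i) * restrictLine x u (P a i)) *
        ∑ i, Polynomial.C (u i) * restrictLine x u (P a i) := by
    simp_rw [derivative_restrictLine, map_sum, Polynomial.derivative_C_mul,
      derivative_restrictLine, hessian_apply, map_sum, map_mul, Finset.sum_mul_sum, Finset.mul_sum]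
    rw [Finset.sum_comm_cycle]
    refine Finset.sum_congr rfl fun a _ => Finset.sum_congr rfl fun i _ =>
      Finset.sum_congr rfl fun j _ => ?_
    ring
  rw [eq_sum_mul_self]
  exact IsSumSq.sum_mul_self _ _

theorem isSOS_sub_tangentPolynomial (hp : IsSOSConvex p) (a : Fin m → ℝ) :
    IsSOS (p - tangentPolynomial a p) := by
  rw [isSOS_iff_isSumSq, ← taylorIntegral_restrictLine]
  exact isSumSq_taylorIntegral (hp.isSumSq_derivative_derivative_restrictLine _ _)

lemma eval_tangentPolynomial_le (hp : IsSOSConvex p) (a v : Fin m → ℝ) :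
    eval v (tangentPolynomial a p) ≤ eval v p := by
  have eval_remainder_nonneg := (hp.isSOS_sub_tangentPolynomial a).eval_nonneg v
  rwa [map_sub, sub_nonneg] at eval_remainder_nonneg

lemma convexOn (hp : IsSOSConvex p) : ConvexOn ℝ Set.univ fun v => eval v p := by
  refine ⟨convex_univ, fun x _ y _ s t hs ht hst => ?_⟩
  have tangent_affine : s * eval x (tangentPolynomial (s • x + t • y) p)
      + t * eval y (tangentPolynomial (s • x + t • y) p) = eval (s • x + t • y) p := by
    obtain rfl : t = 1 - s := by linarith
    simp only [tangentPolynomial, map_add, map_sum, map_mul, map_sub, eval_C, eval_X, mul_add,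
      Finset.mul_sum, Pi.add_apply, Pi.smul_apply, smul_eq_mul]
    rw [add_add_add_comm, ← Finset.sum_add_distrib, ← add_mul, add_sub_cancel, one_mul,
      add_eq_left]
    exact Finset.sum_eq_zero fun i _ => by ring
  simp only [smul_eq_mul, ← tangent_affine]
  exact add_le_add (mul_le_mul_of_nonneg_left (hp.eval_tangentPolynomial_le _ x) hs)
    (mul_le_mul_of_nonneg_left (hp.eval_tangentPolynomial_le _ y) ht)

lemma add (hp : IsSOSConvex p) (hq : IsSOSConvex q) : IsSOSConvex (p + q) := by
  obtain ⟨s, P, hP⟩ := hp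
  obtain ⟨t, Q, hQ⟩ := hq
  have hessian_add : polyHessian (p + q) = polyHessian p + polyHessian q := by
    ext1 i j
    simp [polyHessian]
  refine ⟨s + t, (Matrix.fromRows P Q).submatrix finSumFinEquiv.symm id, ?_⟩
  rw [hessian_add, hP, hQ, ← Matrix.fromCols_mul_fromRows, ← Matrix.transpose_fromRows,
    Matrix.transpose_submatrix, Matrix.submatrix_mul_equiv, Matrix.submatrix_id_id]

lemma C_mul_of_nonneg (hp : IsSOSConvex p) {c : ℝ} (hc : 0 ≤ c) : IsSOSConvex (C c * p) := by
  obtain ⟨s, P, hP⟩ := hp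
  have hessian_C_mul : polyHessian (C c * p) = (C c : MvPolynomial (Fin m) ℝ) • polyHessian p := by
    ext1 i j
    simp [polyHessian]
  refine ⟨s, (C (√c) : MvPolynomial (Fin m) ℝ) • P, ?_⟩
  rw [hessian_C_mul, hP, Matrix.transpose_smul, Matrix.smul_mul, Matrix.mul_smul, smul_smul,
    ← MvPolynomial.C_mul, Real.mul_self_sqrt hc]

lemma of_polyHessian_eq_zero (hp : polyHessian p = 0) : IsSOSConvex p :=
  ⟨0, 0, by simp [hp]⟩

lemma sum {ι : Type*} (s : Finset ι) {f : ι → MvPolynomial (Fin m) ℝ}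
    (hf : ∀ i ∈ s, IsSOSConvex (f i)) : IsSOSConvex (∑ i ∈ s, f i) :=
  Finset.sum_induction f IsSOSConvex (fun _ _ => add)
    (of_polyHessian_eq_zero (by ext1; simp [polyHessian])) hf

end IsSOSConvex

section ConstancySpace

/-- The space of directions along which `f` is constant on every line. -/
def constancySpace {E : Type*} [AddCommGroup E] [Module ℝ E] (f : E → ℝ) : Submodule ℝ E where
  carrier := {u | ∀ x (t : ℝ), f (x + t • u) = f x}
  add_mem' hu hv x t := by rw [smul_add, ← add_assoc, hv, hu]
  zero_mem' x t := by simp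
  smul_mem' c u hu x t := by rw [smul_smul, hu]

lemma apply_add_of_mem_constancySpace {E : Type*} [AddCommGroup E] [Module ℝ E] {f : E → ℝ}
    {u : E} (hu : u ∈ constancySpace f) (x : E) : f (x + u) = f x := by
  simpa only [one_smul] using hu x 1

lemma apply_add_smul_le_max_of_mem_asymptoticCone {E : Type*} [AddCommGroup E] [Module ℝ E]
    [TopologicalSpace E] [IsTopologicalAddGroup E] [ContinuousSMul ℝ E] {f : E → ℝ}
    (hf : ConvexOn ℝ Set.univ f) (hf_cont : Continuous f) {c : ℝ} {u : E}
    (hu : u ∈ asymptoticCone ℝ {v | f v ≤ c}) (x : E) {t : ℝ} (ht : 0 ≤ t) :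
    f (x + t • u) ≤ max (f x) c := by
  have convex_sublevel : Convex ℝ {v | f v ≤ max (f x) c} := by
    simpa only [Set.mem_univ, true_and] using hf.convex_le (max (f x) c)
  have hu' : u ∈ asymptoticCone ℝ {v | f v ≤ max (f x) c} :=
    asymptoticCone_mono (fun v (hv : f v ≤ c) => le_max_of_le_right hv) hu
  rw [add_comm]
  exact convex_sublevel.smul_vadd_mem_of_isClosed_of_mem_asymptoticCone
    (isClosed_le hf_cont continuous_const) ht hu' (le_max_left (f x) c)

theorem exists_forall_le_of_mem_constancySpace {E : Type*} [NormedAddCommGroup E]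
    [NormedSpace ℝ E] [FiniteDimensional ℝ E] {f : E → ℝ} (hf : ConvexOn ℝ Set.univ f)
    (mem_constancySpace : ∀ u, (∀ x, BddAbove ((fun t : ℝ => f (x + t • u)) '' Set.Ici 0)) →
      u ∈ constancySpace f) :
    ∃ a, ∀ v, f a ≤ f v := by
  have hf_cont : Continuous f := hf.locallyLipschitz.continuous
  obtain ⟨W, hW⟩ := (constancySpace f).exists_isCompl
  set S : Set E := {v | f v ≤ f 0} ∩ W
  have asymptoticCone_S : asymptoticCone ℝ S ⊆ {0} := fun u hu => by
    have hu_W : u ∈ W := by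
      have := asymptoticCone_mono Set.inter_subset_right hu
      rwa [asymptoticCone_submodule, W.closed_of_finiteDimensional.closure_eq] at this
    refine Submodule.disjoint_def.1 hW.disjoint u (mem_constancySpace u fun x => ?_) hu_W
    refine ⟨max (f x) (f 0), Set.forall_mem_image.2 fun t ht => ?_⟩
    exact apply_add_smul_le_max_of_mem_asymptoticCone hf hf_cont
      (asymptoticCone_mono Set.inter_subset_left hu) x ht
  have isCompact_S : IsCompact S := Metric.isCompact_of_isClosed_isBounded
    ((isClosed_le hf_cont continuous_const).inter W.closed_of_finiteDimensional)
    (isBounded_iff_asymptoticCone_subset_singleton.2 asymptoticCone_S)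
  obtain ⟨a, -, ha⟩ := isCompact_S.exists_isMinOn ⟨0, le_refl (f 0), W.zero_mem⟩
    hf_cont.continuousOn
  have le_on_W (w : E) (hw : w ∈ W) : f a ≤ f w := by
    by_cases hw0 : f w ≤ f 0
    · exact ha ⟨hw0, hw⟩
    · exact (ha ⟨le_refl (f 0), W.zero_mem⟩).trans (not_le.1 hw0).le
  refine ⟨a, fun v => ?_⟩
  obtain ⟨u, hu, w, hw, rfl⟩ := Submodule.mem_sup.1 (hW.sup_eq_top ▸ Submodule.mem_top (x := v))
  rw [add_comm, apply_add_of_mem_constancySpace hu]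
  exact le_on_W w hw

end ConstancySpace

section Minimizer

lemma eq_C_of_bddBelow_of_bddAbove {φ : Polynomial ℝ}
    (bddBelow : BddBelow ((fun t => φ.eval t) '' Set.Ici 0))
    (bddAbove : BddAbove ((fun t => φ.eval t) '' Set.Ici 0)) :
    φ = Polynomial.C (φ.coeff 0) := by
  obtain ⟨b, hb⟩ := bddBelow
  obtain ⟨c, hc⟩ := bddAbove
  refine Polynomial.eq_C_of_degree_le_zero (φ.isBoundedUnder_abs_atTop_iff.1 ?_)
  refine Filter.isBoundedUnder_of_eventually_le (a := max |b| |c|) ?_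
  filter_upwards [Filter.eventually_ge_atTop 0] with t ht
  exact abs_le_max_abs_abs (hb (Set.mem_image_of_mem _ ht)) (hc (Set.mem_image_of_mem _ ht))

variable {σ : Type*} [Finite σ]

theorem exists_forall_eval_le {p : MvPolynomial σ ℝ}
    (hp_convex : ConvexOn ℝ Set.univ fun v => eval v p)
    (hp_bddBelow : BddBelow (Set.range fun v => eval v p)) :
    ∃ a, ∀ v, eval a p ≤ eval v p := by
  cases nonempty_fintype σ
  refine exists_forall_le_of_mem_constancySpace hp_convex fun u hu x t => ?_
  simp only [← eval_restrictLine_real] at hu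
  have bddBelow : BddBelow ((fun t => (restrictLine x u p).eval t) '' Set.Ici 0) :=
    hp_bddBelow.mono <| by
      rintro _ ⟨t, -, rfl⟩
      exact ⟨x + t • u, (eval_restrictLine_real x u t p).symm⟩
  have eval_const (t : ℝ) : eval (x + t • u) p = (restrictLine x u p).coeff 0 := by
    rw [← eval_restrictLine_real, eq_C_of_bddBelow_of_bddAbove bddBelow (hu x)]
    simp
  simpa using (eval_const t).trans (eval_const 0).symm

lemma eval_pderiv_eq_zero_of_forall_le {a : σ → ℝ} {p : MvPolynomial σ ℝ}
    (ha : ∀ v, eval a p ≤ eval v p) (i : σ) : eval a (pderiv i p) = 0 := by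
  classical
  cases nonempty_fintype σ
  have isLocalMin : IsLocalMin (fun t => (restrictLine a (Pi.single i 1) p).eval t) 0 :=
    .of_forall fun t => by simpa [eval_restrictLine_real] using ha _
  have derivative_eq_zero := isLocalMin.hasDerivAt_eq_zero (Polynomial.hasDerivAt _ 0)
  simpa [derivative_restrictLine, Polynomial.eval_finsetSum, eval_restrictLine_real,
    Pi.single_apply] using derivative_eq_zero

end Minimizer

theorem IsSOSConvex.isSOS_of_nonneg {m : ℕ} {p : MvPolynomial (Fin m) ℝ} (hp : IsSOSConvex p)
    (hp_nonneg : ∀ v, 0 ≤ eval v p) : IsSOS p := by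
  obtain ⟨a, ha⟩ := exists_forall_eval_le hp.convexOn ⟨0, Set.forall_mem_range.2 hp_nonneg⟩
  have tangent_eq : tangentPolynomial a p = C (√(eval a p)) * C (√(eval a p)) := by
    rw [← C_mul, Real.mul_self_sqrt (hp_nonneg a)]
    simp [tangentPolynomial, eval_pderiv_eq_zero_of_forall_le ha]
  have remainder := isSOS_iff_isSumSq.1 (hp.isSOS_sub_tangentPolynomial a)
  rw [isSOS_iff_isSumSq, ← sub_add_cancel p (tangentPolynomial a p)]
  exact remainder.add (tangent_eq ▸ IsSumSq.mul_self _)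

section InteriorCone

open scoped Pointwise

variable {E : Type*} [AddCommGroup E] [Module ℝ E] [TopologicalSpace E] {K : PointedCone ℝ E}

lemma add_mem_interior_cone [IsTopologicalAddGroup E] {S T : E} (hS : S ∈ K)
    (hT : T ∈ interior (K : Set E)) :
    S + T ∈ interior (K : Set E) :=
  interior_mono (Set.add_subset_iff.2 fun _ hx _ hy => K.add_mem hx hy)
    (subset_interior_add_right (Set.add_mem_add hS hT))

lemma smul_mem_interior_cone [ContinuousConstSMul ℝ E] {c : ℝ} (hc : 0 < c) {S : E}
    (hS : S ∈ interior (K : Set E)) :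
    c • S ∈ interior (K : Set E) := by
  have smul_subset : c • (K : Set E) ⊆ K := by
    rintro _ ⟨T, hT, rfl⟩
    exact K.smul_mem hc.le hT
  refine interior_mono smul_subset ?_
  rw [interior_smul₀ hc.ne']
  exact Set.smul_mem_smul_set hS

end InteriorCone

section Alternative

variable {ι W E : Type*} [AddCommGroup W] [Module ℝ W]
  [AddCommGroup E] [Module ℝ E] [TopologicalSpace E] [IsTopologicalAddGroup E]
  {K : PointedCone ℝ E} {g : ι → W → ℝ} {G : W →ᵃ[ℝ] E}

variable (K g G) in
/-- The perturbations `(y, S)` for which the system `g i w < y i`, `S + G w ∈ interior K` is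
solvable in `w`. The unperturbed system is the one at `0`. -/
def solvablePerturbations : Set ((ι → ℝ) × E) :=
  {p | ∃ w, (∀ i, g i w < p.1 i) ∧ p.2 + G w ∈ interior (K : Set E)}

lemma isOpen_solvablePerturbations [Finite ι] : IsOpen (solvablePerturbations K g G) := by
  simp only [solvablePerturbations, Set.ofPred_exists, Set.ofPred_and, Set.ofPred_forall]
  refine isOpen_iUnion fun w => .inter (isOpen_iInter_of_finite fun i => ?_) ?_
  · exact isOpen_lt continuous_const (by fun_prop)
  · exact isOpen_interior.preimage (by fun_prop)

variable [ContinuousSMul ℝ E]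

lemma convex_solvablePerturbations (hg : ∀ i, ConvexOn ℝ Set.univ (g i)) :
    Convex ℝ (solvablePerturbations K g G) := by
  rw [convex_iff_forall_pos]
  rintro ⟨y, S⟩ ⟨w, hy, hS⟩ ⟨y', S'⟩ ⟨w', hy', hS'⟩ s t hs ht hst
  refine ⟨s • w + t • w', fun i => ?_, ?_⟩
  · refine ((hg i).2 trivial trivial hs.le ht.le hst).trans_lt ?_
    exact add_lt_add (mul_lt_mul_of_pos_left (hy i) hs) (mul_lt_mul_of_pos_left (hy' i) ht)
  · rw [Convex.combo_affine_apply hst]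
    convert K.convex.interior hS hS' hs.le ht.le hst using 1
    simp only [Prod.snd_add, Prod.smul_snd, smul_add]
    abel

lemma mem_closure_solvablePerturbations {w₀ : W} (hw₀ : G w₀ ∈ interior (K : Set E)) {w : W}
    {y : ι → ℝ} {S : E} (hy : ∀ i, g i w ≤ y i) (hS : S + G w ∈ K) :
    (y, S) ∈ closure (solvablePerturbations K g G) := by
  have tendsto : Filter.Tendsto (fun ε : ℝ => (y, S) + ε • ((1, G w₀) : (ι → ℝ) × E))
      (nhdsWithin 0 (Set.Ioi 0)) (nhds (y, S)) := by
    refine Filter.Tendsto.mono_left ?_ nhdsWithin_le_nhds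
    exact (by fun_prop : Continuous _).tendsto' _ _ (by simp)
  refine mem_closure_of_tendsto tendsto ?_
  filter_upwards [self_mem_nhdsWithin] with ε hε
  refine ⟨w, fun i => ?_, ?_⟩
  · simpa using (hy i).trans_lt (lt_add_of_pos_right _ hε)
  · convert add_mem_interior_cone hS (smul_mem_interior_cone hε hw₀) using 1
    exact add_right_comm _ _ _

lemma nonneg_of_forall_nonneg_add_mul {a b : ℝ} (h : ∀ t, 0 ≤ t → 0 ≤ a + t * b) : 0 ≤ b := by
  by_contra! hb
  have := h ((|a| + 1) / -b) (by have := neg_pos.2 hb; positivity)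
  rw [div_mul_eq_mul_div, div_neg, mul_div_cancel_right₀ _ hb.ne] at this
  linarith [le_abs_self a]

lemma exists_separating_functional [Finite ι] (hg : ∀ i, ConvexOn ℝ Set.univ (g i)) {w₀ : W}
    (hw₀ : G w₀ ∈ interior (K : Set E)) (h : ∀ w, G w ∈ K → ∃ i, 0 ≤ g i w) :
    ∃ f : ((ι → ℝ) × E) →L[ℝ] ℝ, (∀ y S, 0 ≤ y → S ∈ K → 0 ≤ f (y, S)) ∧
      (∀ w, 0 ≤ f (fun i => g i w, -G w)) ∧ ∃ y, 0 < f (y, 0) := by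
  have zero_notMem : (0 : (ι → ℝ) × E) ∉ solvablePerturbations K g G := by
    rintro ⟨w, hgw, hGw⟩
    obtain ⟨i, hi⟩ := h w (by simpa using interior_subset hGw)
    exact hi.not_gt (hgw i)
  obtain ⟨f, hf⟩ := geometric_hahn_banach_point_open (convex_solvablePerturbations hg)
    isOpen_solvablePerturbations zero_notMem
  rw [map_zero] at hf
  have nonneg_of_le {w : W} {y : ι → ℝ} {S : E} (hy : ∀ i, g i w ≤ y i) (hS : S + G w ∈ K) :
      0 ≤ f (y, S) :=
    closure_minimal (fun p hp => (hf p hp).le) (isClosed_le continuous_const f.continuous)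
      (mem_closure_solvablePerturbations hw₀ hy hS)
  refine ⟨f, fun y S hy hS => ?_, fun w => nonneg_of_le (fun i => le_rfl) (by simp),
    fun i => g i w₀ + 1, hf _ ⟨w₀, fun i => lt_add_one _, by simpa using hw₀⟩⟩
  refine nonneg_of_forall_nonneg_add_mul (a := f (fun i => g i w₀, 0)) fun t ht => ?_
  rw [← smul_eq_mul, ← map_smul, ← map_add]
  refine nonneg_of_le (w := w₀) (fun i => ?_) ?_
  · simpa using mul_nonneg ht (hy i)
  · simpa using K.add_mem (K.smul_mem ht hS) (interior_subset hw₀)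

theorem exists_multipliers [Fintype ι] (hg : ∀ i, ConvexOn ℝ Set.univ (g i)) {w₀ : W}
    (hw₀ : G w₀ ∈ interior (K : Set E)) (h : ∀ w, G w ∈ K → ∃ i, 0 ≤ g i w) :
    ∃ (φ : E →L[ℝ] ℝ) (δ : ι → ℝ), (∀ S ∈ K, 0 ≤ φ S) ∧ δ ∈ stdSimplex ℝ ι ∧
      ∀ w, φ (G w) ≤ ∑ i, δ i * g i w := by
  classical
  obtain ⟨f, f_nonneg, f_graph_nonneg, y, f_pos⟩ := exists_separating_functional hg hw₀ h
  set δ : ι → ℝ := fun i => f (Pi.single i 1, 0)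
  have f_eq (y : ι → ℝ) (S : E) : f (y, S) = ∑ i, δ i * y i + f (0, S) := by
    have f_inl : f (y, 0) = ∑ i, δ i * y i := by
      have y_eq : (y, (0 : E)) = ∑ i, y i • (Pi.single i 1, 0) := by
        rw [Prod.ext_iff]
        exact ⟨by simpa [Prod.fst_sum] using pi_eq_sum_univ' y, by simp [Prod.snd_sum]⟩
      rw [y_eq, map_sum]
      simp only [map_smul, smul_eq_mul, δ, mul_comm]
    rw [← f_inl, ← map_add, Prod.mk_add_mk, add_zero, zero_add]
  have δ_nonneg (i : ι) : 0 ≤ δ i := f_nonneg _ _ (Pi.single_nonneg.2 zero_le_one) K.zero_mem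
  have sum_pos : 0 < ∑ i, δ i := by
    refine (Finset.sum_nonneg fun i _ => δ_nonneg i).lt_of_ne' fun hδ => f_pos.ne' ?_
    rw [Finset.sum_eq_zero_iff_of_nonneg fun i _ => δ_nonneg i] at hδ
    rw [f_eq, Finset.sum_eq_zero fun i hi => by rw [hδ i hi, zero_mul], zero_add]
    exact map_zero f
  refine ⟨(∑ i, δ i)⁻¹ • f ∘L .inr ℝ (ι → ℝ) E, fun i => (∑ i, δ i)⁻¹ * δ i,
    fun S hS => mul_nonneg (inv_nonneg.2 sum_pos.le) (f_nonneg 0 S le_rfl hS),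
    ⟨fun i => mul_nonneg (inv_nonneg.2 sum_pos.le) (δ_nonneg i), ?_⟩, fun w => ?_⟩
  · rw [← Finset.mul_sum, inv_mul_cancel₀ sum_pos.ne']
  · have f_graph := f_graph_nonneg w
    rw [f_eq, ← neg_zero (G := ι → ℝ), ← Prod.neg_mk, map_neg, ← sub_eq_add_neg,
      sub_nonneg] at f_graph
    simp only [mul_assoc, ← Finset.mul_sum]
    exact mul_le_mul_of_nonneg_left f_graph (inv_nonneg.2 sum_pos.le)

end Alternative

section QuadFormCone

variable {n : Type*} [Fintype n]

variable (n) in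
/-- The cone of real square matrices with nonnegative quadratic form. Unlike the cone of positive
semidefinite matrices, it has nonempty interior in the space of all square matrices, since its
members need not be symmetric. -/
def quadFormCone : PointedCone ℝ (Matrix n n ℝ) where
  carrier := {S | ∀ x : n → ℝ, 0 ≤ x ⬝ᵥ S *ᵥ x}
  add_mem' hS hT x := by
    rw [add_mulVec, dotProduct_add]
    exact add_nonneg (hS x) (hT x)
  zero_mem' x := by simp
  smul_mem' c S hS x := by
    change 0 ≤ x ⬝ᵥ ((c : ℝ) • S) *ᵥ x
    rw [smul_mulVec, dotProduct_smul]
    exact smul_nonneg c.2 (hS x)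

lemma posSemidef_of_mem_quadFormCone {S : Matrix n n ℝ} (hS : S ∈ quadFormCone n)
    (hS_symm : S.IsSymm) : S.PosSemidef :=
  .of_dotProduct_mulVec_nonneg (by rwa [IsHermitian, conjTranspose_eq_transpose_of_trivial]) hS

lemma mem_interior_quadFormCone {S : Matrix n n ℝ} (hS : S.PosDef) :
    S ∈ interior (quadFormCone n : Set (Matrix n n ℝ)) := by
  have continuous_quadForm : Continuous fun z : Matrix n n ℝ × (n → ℝ) => z.2 ⬝ᵥ z.1 *ᵥ z.2 := by
    simp only [dotProduct, mulVec]
    fun_prop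
  have eventually_pos_on_sphere : ∀ᶠ T in nhds S, ∀ x ∈ Metric.sphere (0 : n → ℝ) 1,
      0 < x ⬝ᵥ T *ᵥ x := by
    refine (isCompact_sphere _ _).eventually_forall_of_forall_eventually fun x hx => ?_
    exact continuous_quadForm.continuousAt.eventually_const_lt
      (hS.dotProduct_mulVec_pos (ne_zero_of_mem_unit_sphere ⟨x, hx⟩))
  rw [mem_interior_iff_mem_nhds]
  filter_upwards [eventually_pos_on_sphere] with T hT x
  rcases eq_or_ne x 0 with rfl | hx
  · simp
  have unit_pos := hT (‖x‖⁻¹ • x) (by simp [norm_smul, hx])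
  rw [mulVec_smul, dotProduct_smul, smul_dotProduct, smul_smul, smul_eq_mul] at unit_pos
  exact (pos_of_mul_pos_right unit_pos (mul_self_nonneg _)).le

lemma exists_forall_eq_trace_mul [DecidableEq n] (φ : Matrix n n ℝ →ₗ[ℝ] ℝ) :
    ∃ Z : Matrix n n ℝ, (∀ i j, Z i j = φ (single j i 1)) ∧ ∀ S, φ S = (Z * S).trace := by
  refine ⟨of fun i j => φ (single j i 1), fun _ _ => rfl, fun S => ?_⟩
  conv_lhs => rw [matrix_eq_sum_single S]
  simp only [map_sum, trace, diag, mul_apply, of_apply]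
  rw [Finset.sum_comm]
  refine Finset.sum_congr rfl fun i _ => Finset.sum_congr rfl fun j _ => ?_
  rw [← mul_one (S j i), ← smul_eq_mul, ← smul_single, map_smul, smul_eq_mul, smul_eq_mul, mul_one,
    mul_comm]

theorem exists_posSemidef_forall_eq_trace_mul {φ : Matrix n n ℝ →ₗ[ℝ] ℝ}
    (hφ : ∀ S ∈ quadFormCone n, 0 ≤ φ S) :
    ∃ Z : Matrix n n ℝ, Z.PosSemidef ∧ ∀ S, φ S = (Z * S).trace := by
  classical
  obtain ⟨Z, Z_apply, φ_eq⟩ := exists_forall_eq_trace_mul φ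
  have le_transpose (S : Matrix n n ℝ) : φ Sᵀ ≤ φ S := by
    rw [← sub_nonneg, ← map_sub]
    refine hφ _ fun x => ?_
    rw [sub_mulVec, dotProduct_sub, dotProduct_mulVec x Sᵀ, vecMul_transpose, dotProduct_comm,
      sub_self]
  refine ⟨Z, .of_dotProduct_mulVec_nonneg ?_ fun x => ?_, φ_eq⟩
  · ext i j
    rw [conjTranspose_apply, star_trivial, Z_apply, Z_apply]
    refine le_antisymm ?_ ?_
    · simpa only [transpose_single] using le_transpose (single j i 1)
    · simpa only [transpose_single] using le_transpose (single i j 1)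
  · have φ_vecMulVec : φ (vecMulVec x x) = star x ⬝ᵥ Z *ᵥ x := by
      rw [φ_eq, mul_vecMulVec, trace_vecMulVec, star_trivial, dotProduct_comm]
    rw [← φ_vecMulVec]
    refine hφ _ fun y => ?_
    rw [vecMulVec_mulVec, dotProduct_smul, dotProduct_comm y x]
    exact mul_self_nonneg (x ⬝ᵥ y)

open scoped MatrixOrder in
lemma trace_mul_nonneg_of_posSemidef {S T : Matrix n n ℝ} (hS : S.PosSemidef)
    (hT : T.PosSemidef) : 0 ≤ (S * T).trace := by
  classical
  obtain ⟨R, rfl⟩ := CStarAlgebra.nonneg_iff_eq_star_mul_self.mp hS.nonneg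
  rw [Matrix.mul_assoc, trace_mul_comm]
  exact (hT.mul_mul_conjTranspose_same R).trace_nonneg

end QuadFormCone

section Pencil

variable {σ τ n : Type*} [Fintype σ] [Fintype τ]

/-- The linear matrix pencil `(v, ξ) ↦ F₀ + Σᵢ vᵢ Fᵢ + Σₜ ξₜ Mₜ`. -/
def pencil (F0 : Matrix n n ℝ) (F : σ → Matrix n n ℝ) (M : τ → Matrix n n ℝ) :
    (σ → ℝ) × (τ → ℝ) →ᵃ[ℝ] Matrix n n ℝ :=
  ((Fintype.linearCombination ℝ F).coprod (Fintype.linearCombination ℝ M)).toAffineMap +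
    AffineMap.const ℝ _ F0

variable {F0 : Matrix n n ℝ} {F : σ → Matrix n n ℝ} {M : τ → Matrix n n ℝ}

lemma pencil_apply (v : σ → ℝ) (ξ : τ → ℝ) :
    pencil F0 F M (v, ξ) = F0 + ∑ i, v i • F i + ∑ t, ξ t • M t := by
  simp only [pencil, AffineMap.coe_add, LinearMap.coe_toAffineMap, AffineMap.coe_const,
    Pi.add_apply, LinearMap.coprod_apply, Fintype.linearCombination_apply, Function.const_apply]
  abel

lemma isSymm_pencil (hF0 : F0.IsSymm) (hF : ∀ i, (F i).IsSymm) (hM : ∀ t, (M t).IsSymm)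
    (w : (σ → ℝ) × (τ → ℝ)) : (pencil F0 F M w).IsSymm := by
  rw [← Prod.mk.eta (p := w), pencil_apply, IsSymm, transpose_add, transpose_add, transpose_sum,
    transpose_sum, hF0]
  simp only [transpose_smul, (hF _).eq, (hM _).eq]

lemma trace_mul_pencil [Fintype n] (Z : Matrix n n ℝ) (v : σ → ℝ) (ξ : τ → ℝ) :
    (Z * pencil F0 F M (v, ξ)).trace =
      (Z * F0).trace + ∑ i, v i * (Z * F i).trace + ∑ t, ξ t * (Z * M t).trace := by
  simp [pencil_apply, Matrix.mul_add, Matrix.mul_sum, Matrix.trace_sum]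

end Pencil

section Lagrangian

variable {ι σ n : Type*} [Fintype ι] [Fintype σ] [Fintype n]

/-- The Lagrangian `Σ_ℓ δ_ℓ g_ℓ(v) - tr (Z F₀) - Σᵢ vᵢ tr (Z Fᵢ)`, as a polynomial in `v`, of the
problem of minimizing `max_ℓ g_ℓ(v)` over the projected spectrahedron. The term
`Σₜ ξₜ tr (Z Mₜ)` is omitted because dual feasibility makes it vanish. -/
def lagrangian (g : ι → MvPolynomial σ ℝ) (F0 : Matrix n n ℝ) (F : σ → Matrix n n ℝ)
    (Z : Matrix n n ℝ) (δ : ι → ℝ) : MvPolynomial σ ℝ :=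
  ∑ ℓ, C (δ ℓ) * g ℓ - C (Z * F0).trace - ∑ i, C (Z * F i).trace * X i

variable {g : ι → MvPolynomial σ ℝ} {F0 : Matrix n n ℝ} {F : σ → Matrix n n ℝ}
  {Z : Matrix n n ℝ} {δ : ι → ℝ}

lemma eval_lagrangian {τ : Type*} [Fintype τ] {M : τ → Matrix n n ℝ}
    (hM : ∀ t, (Z * M t).trace = 0) (v : σ → ℝ) (ξ : τ → ℝ) :
    eval v (lagrangian g F0 F Z δ)
      = ∑ ℓ, δ ℓ * eval v (g ℓ) - (Z * pencil F0 F M (v, ξ)).trace := by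
  simp only [lagrangian, trace_mul_pencil, hM, map_sub, map_sum, map_mul, eval_C, eval_X, mul_zero,
    Finset.sum_const_zero, mul_comm (v _)]
  ring

lemma totalDegree_lagrangian_le {d : ℕ} (hd : 1 ≤ d) (hg : ∀ ℓ, (g ℓ).totalDegree ≤ d) :
    (lagrangian g F0 F Z δ).totalDegree ≤ d := by
  have totalDegree_C_mul_le (c : ℝ) {p : MvPolynomial σ ℝ} (hp : p.totalDegree ≤ d) :
      (C c * p).totalDegree ≤ d := by
    refine (totalDegree_mul _ _).trans ?_
    rwa [totalDegree_C, zero_add]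
  refine (totalDegree_sub _ _).trans (max_le ((totalDegree_sub_C_le _ _).trans ?_) ?_)
  · exact totalDegree_finsetSum_le fun ℓ _ => totalDegree_C_mul_le _ (hg ℓ)
  · exact totalDegree_finsetSum_le fun i _ =>
      totalDegree_C_mul_le _ ((totalDegree_X i).trans_le hd)

end Lagrangian

lemma isSOSConvex_lagrangian {ι n : Type*} [Fintype ι] [Fintype n] {m : ℕ}
    {g : ι → MvPolynomial (Fin m) ℝ} (hg : ∀ ℓ, IsSOSConvex (g ℓ)) {F0 : Matrix n n ℝ}
    {F : Fin m → Matrix n n ℝ} {Z : Matrix n n ℝ} {δ : ι → ℝ} (hδ : ∀ ℓ, 0 ≤ δ ℓ) :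
    IsSOSConvex (lagrangian g F0 F Z δ) := by
  rw [lagrangian, sub_sub, sub_eq_add_neg]
  refine (IsSOSConvex.sum _ fun ℓ _ => (hg ℓ).C_mul_of_nonneg (hδ ℓ)).add
    (.of_polyHessian_eq_zero ?_)
  ext1 i j
  simp [polyHessian, pderiv_X, Pi.single_apply, apply_ite]

section Duality

lemma eq_zero_of_forall_mul_le {b c : ℝ} (h : ∀ s, s * b ≤ c) : b = 0 := by
  refine le_antisymm (neg_nonneg.1 ?_) ?_ <;>
    refine nonneg_of_forall_nonneg_add_mul (a := c) fun t _ => ?_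
  · linarith [h t]
  · linarith [h (-t)]

lemma exists_nonneg_of_sum_mul_nonneg {ι : Type*} [Fintype ι] {δ y : ι → ℝ}
    (hδ : δ ∈ stdSimplex ℝ ι) (h : 0 ≤ ∑ i, δ i * y i) : ∃ i, 0 ≤ y i := by
  by_contra! hy
  obtain ⟨i, -, hi⟩ := Finset.exists_ne_zero_of_sum_ne_zero (hδ.2 ▸ one_ne_zero)
  refine h.not_gt (Finset.sum_neg' (fun j _ => ?_) ⟨i, Finset.mem_univ i, ?_⟩)
  · exact mul_nonpos_of_nonneg_of_nonpos (hδ.1 j) (hy j).le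
  · exact mul_neg_of_pos_of_neg ((hδ.1 i).lt_of_ne' hi) (hy i)

variable {m N ν : ℕ} {ι : Type*} [Fintype ι] {F0 : Matrix (Fin ν) (Fin ν) ℝ}
  {F : Fin m → Matrix (Fin ν) (Fin ν) ℝ} {M : Fin N → Matrix (Fin ν) (Fin ν) ℝ}
  {g : ι → MvPolynomial (Fin m) ℝ}

lemma mem_projSpec_iff {v : Fin m → ℝ} :
    v ∈ projSpec F0 F M ↔ ∃ ξ, (pencil F0 F M (v, ξ)).PosSemidef := by
  simp only [projSpec, pencil_apply, Set.mem_ofPred_eq]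

theorem exists_nonneg_of_isSOS_lagrangian {Z : Matrix (Fin ν) (Fin ν) ℝ} (hZ : Z.PosSemidef)
    {δ : ι → ℝ} (hδ : δ ∈ stdSimplex ℝ ι) (h_sos : IsSOS (lagrangian g F0 F Z δ))
    (hZM : ∀ t, (Z * M t).trace = 0) {v : Fin m → ℝ} (hv : v ∈ projSpec F0 F M) :
    ∃ ℓ, 0 ≤ eval v (g ℓ) := by
  obtain ⟨ξ, hξ⟩ := mem_projSpec_iff.1 hv
  refine exists_nonneg_of_sum_mul_nonneg hδ ((trace_mul_nonneg_of_posSemidef hZ hξ).trans ?_)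
  rw [← sub_nonneg, ← eval_lagrangian hZM]
  exact h_sos.eval_nonneg v

theorem exists_isSOS_lagrangian (hF0 : F0.IsSymm) (hF : ∀ i, (F i).IsSymm)
    (hM : ∀ t, (M t).IsSymm) (hg : ∀ ℓ, IsSOSConvex (g ℓ))
    (hslater : ∃ w₀, (pencil F0 F M w₀).PosDef)
    (h : ∀ v ∈ projSpec F0 F M, ∃ ℓ, 0 ≤ eval v (g ℓ)) :
    ∃ (Z : Matrix (Fin ν) (Fin ν) ℝ) (δ : ι → ℝ), Z.PosSemidef ∧ δ ∈ stdSimplex ℝ ι ∧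
      IsSOS (lagrangian g F0 F Z δ) ∧ ∀ t, (Z * M t).trace = 0 := by
  obtain ⟨w₀, hw₀⟩ := hslater
  obtain ⟨φ, δ, φ_nonneg, hδ, φ_le⟩ := exists_multipliers
    (fun ℓ => (hg ℓ).convexOn.comp_linearMap (.fst ℝ (Fin m → ℝ) (Fin N → ℝ)))
    (mem_interior_quadFormCone hw₀) fun w hw => h w.1 <| mem_projSpec_iff.2
      ⟨w.2, posSemidef_of_mem_quadFormCone hw (isSymm_pencil hF0 hF hM w)⟩
  obtain ⟨Z, hZ, φ_eq⟩ := exists_posSemidef_forall_eq_trace_mul (φ := φ.toLinearMap) φ_nonneg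
  have trace_le (v : Fin m → ℝ) (ξ : Fin N → ℝ) :
      (Z * pencil F0 F M (v, ξ)).trace ≤ ∑ ℓ, δ ℓ * eval v (g ℓ) := by
    rw [← φ_eq]
    exact φ_le (v, ξ)
  have trace_mul_M_eq_zero (t : Fin N) : (Z * M t).trace = 0 := by
    refine eq_zero_of_forall_mul_le
      (c := ∑ ℓ, δ ℓ * eval 0 (g ℓ) - (Z * F0).trace) fun s => le_sub_iff_add_le'.2 ?_
    simpa [trace_mul_pencil, Pi.single_apply] using trace_le 0 (Pi.single t s)
  refine ⟨Z, δ, hZ, hδ, ?_, trace_mul_M_eq_zero⟩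
  refine (isSOSConvex_lagrangian hg hδ.1).isSOS_of_nonneg fun v => ?_
  rw [eval_lagrangian trace_mul_M_eq_zero v 0, sub_nonneg]
  exact trace_le v 0

end Duality

lemma pwMinMax_nonneg_iff {m r L : ℕ} [NeZero r] [NeZero L]
    {g : Fin r → Fin L → MvPolynomial (Fin m) ℝ} {v : Fin m → ℝ} :
    0 ≤ pwMinMax g v ↔ ∀ k, ∃ ℓ, 0 ≤ eval v (g k ℓ) := by
  simp [pwMinMax, Finset.le_inf'_iff, Finset.le_sup'_iff]

theorem sos_representation_piecewise_sosConvex_general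
    {m N ν L r : ℕ} [NeZero L] [NeZero r]
    (F0 : Matrix (Fin ν) (Fin ν) ℝ) (F : Fin m → Matrix (Fin ν) (Fin ν) ℝ)
    (M : Fin N → Matrix (Fin ν) (Fin ν) ℝ)
    (hF0 : F0.IsSymm) (hF : ∀ i, (F i).IsSymm) (hM : ∀ t, (M t).IsSymm)
    (g : Fin r → Fin L → MvPolynomial (Fin m) ℝ)
    (hg : ∀ k ℓ, IsSOSConvex (g k ℓ))
    (hslater : ∃ (vbar : Fin m → ℝ) (ξbar : Fin N → ℝ),
      (F0 + ∑ i, vbar i • F i + ∑ t, ξbar t • M t).PosDef)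
    (d : ℕ) (hd : 1 ≤ d) (hdeg : ∀ k ℓ, (g k ℓ).totalDegree ≤ d) :
    (∀ v ∈ projSpec F0 F M, 0 ≤ pwMinMax g v) ↔
      (∀ k, ∃ (Z : Matrix (Fin ν) (Fin ν) ℝ) (δ : Fin L → ℝ),
        Z.PosSemidef ∧ (∀ ℓ, 0 ≤ δ ℓ) ∧ (∑ ℓ, δ ℓ = 1) ∧
        IsSOSDeg d (∑ ℓ, C (δ ℓ) * g k ℓ - C ((Z * F0).trace)
          - ∑ i, C ((Z * F i).trace) * X i) ∧
        (∀ t, (Z * M t).trace = 0)) := by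
  simp only [pwMinMax_nonneg_iff]
  constructor
  · intro h k
    obtain ⟨vbar, ξbar, hpos⟩ := hslater
    obtain ⟨Z, δ, hZ, hδ, h_sos, hZM⟩ := exists_isSOS_lagrangian hF0 hF hM (hg k)
      ⟨(vbar, ξbar), by rwa [pencil_apply]⟩ fun v hv => h v hv k
    exact ⟨Z, δ, hZ, hδ.1, hδ.2, ⟨h_sos, totalDegree_lagrangian_le hd (hdeg k)⟩, hZM⟩
  · intro h v hv k
    obtain ⟨Z, δ, hZ, hδ, hδ1, ⟨h_sos, -⟩, hZM⟩ := h k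
    exact exists_nonneg_of_isSOS_lagrangian hZ ⟨hδ, hδ1⟩ h_sos hZM hv

/-- SOS representation for non-negative piecewise SOS-convex
functions over a compact projected spectrahedron. -/
theorem sos_representation_piecewise_sosConvex
    {m N ν L r : ℕ} [NeZero L] [NeZero r]
    (F0 : Matrix (Fin ν) (Fin ν) ℝ) (F : Fin m → Matrix (Fin ν) (Fin ν) ℝ)
    (M : Fin N → Matrix (Fin ν) (Fin ν) ℝ)
    (hF0 : F0.IsSymm) (hF : ∀ i, (F i).IsSymm) (hM : ∀ t, (M t).IsSymm)
    (g : Fin r → Fin L → MvPolynomial (Fin m) ℝ)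
    (hg : ∀ k ℓ, IsSOSConvex (g k ℓ))
    (hcompact : IsCompact (projSpec F0 F M))
    (hslater : ∃ (vbar : Fin m → ℝ) (ξbar : Fin N → ℝ),
      (F0 + ∑ i, vbar i • F i + ∑ t, ξbar t • M t).PosDef)
    (d : ℕ) (hdeven : Even d)
    (hdgt : ∀ k ℓ, (g k ℓ).totalDegree < d)
    (hdmin : ∀ d', Even d' → (∀ k ℓ, (g k ℓ).totalDegree < d') → d ≤ d') :
    (∀ v ∈ projSpec F0 F M, 0 ≤ pwMinMax g v) ↔
      (∀ k, ∃ (Z : Matrix (Fin ν) (Fin ν) ℝ) (δ : Fin L → ℝ),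
        Z.PosSemidef ∧ (∀ ℓ, 0 ≤ δ ℓ) ∧ (∑ ℓ, δ ℓ = 1) ∧
        IsSOSDeg d (∑ ℓ, C (δ ℓ) * g k ℓ - C ((Z * F0).trace)
          - ∑ i, C ((Z * F i).trace) * X i) ∧
        (∀ t, (Z * M t).trace = 0)) :=
  sos_representation_piecewise_sosConvex_general F0 F M hF0 hF hM g hg hslater d
    (Nat.one_le_of_lt (hdgt 0 0)) fun k ℓ => (hdgt k ℓ).le

end
end

section
/- Consider the polynomial optimization problem min_{v∈Ω} g(v), where g is an SOS-convex polynomial of degree at most an even integer d and Ω = {v ∈ ℝ^m : ∃ ξ ∈ ℝ^N, F_0 + Σ_i v_i F_i + Σ_t ξ_t M_t ⪰ 0}. Consider the SDP (P2): max over λ ∈ ℝ and Z ⪰ 0 of −λ subject to g(v) + λ − tr(ZF_0) − Σ_i v_i tr(ZF_i) ∈ Σ_d^2(v) and tr(ZM_t) = 0 for all t; and its dual SDP (P3): min over y ∈ ℝ^{s(m,d)} and ξ ∈ ℝ^N of Σ_{α∈N} y_α (g)_α subject to F_0 + Σ_i y_{e_i} F_i + Σ_t ξ_t M_t ⪰ 0,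 y_0 = 1, and Σ_{α∈N} y_α B_α ⪰ 0. Suppose Ω is compact, there exist v̄, ξ̄ with F_0 + Σ_i v̄_i F_i + Σ_t ξ̄_t M_t ≻ 0, and max(P2) = min(P3). If (ȳ, ξ̄) is a minimizer of (P3), then the point (ȳ_{e_1},…,ȳ_{e_m}) ∈ ℝ^m is a minimizer of min_{v∈Ω} g(v). -/
open MvPolynomial Matrix
open scoped BigOperators

noncomputable section

def mdeg {m : ℕ} (α : Fin m →₀ ℕ) : ℕ := α.sum fun _ e => e

def MomMatPSD {m : ℕ} (d : ℕ) (y : (Fin m →₀ ℕ) → ℝ) : Prop :=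
  ∀ c : (Fin m →₀ ℕ) →₀ ℝ, (∀ β ∈ c.support, mdeg β ≤ d / 2) →
    0 ≤ ∑ β ∈ c.support, ∑ γ ∈ c.support, c β * c γ * y (β + γ)

/-- The value set of the SDP (P2). -/
def P2vals {m N ν : ℕ} (F0 : Matrix (Fin ν) (Fin ν) ℝ)
    (F : Fin m → Matrix (Fin ν) (Fin ν) ℝ) (M : Fin N → Matrix (Fin ν) (Fin ν) ℝ)
    (g : MvPolynomial (Fin m) ℝ) (d : ℕ) : Set ℝ :=
  {val | ∃ (lam : ℝ) (Z : Matrix (Fin ν) (Fin ν) ℝ), Z.PosSemidef ∧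
    IsSOSDeg d (g + C lam - C ((Z * F0).trace)
      - ∑ i, C ((Z * F i).trace) * X i) ∧
    (∀ t, (Z * M t).trace = 0) ∧ val = -lam}

/-- Feasibility for the dual SDP (P3). -/
def P3Feasible {m N ν : ℕ} (F0 : Matrix (Fin ν) (Fin ν) ℝ)
    (F : Fin m → Matrix (Fin ν) (Fin ν) ℝ) (M : Fin N → Matrix (Fin ν) (Fin ν) ℝ)
    (d : ℕ) (y : (Fin m →₀ ℕ) → ℝ) (ξ : Fin N → ℝ) : Prop :=
  (F0 + ∑ i, y (Finsupp.single i 1) • F i + ∑ t, ξ t • M t).PosSemidef ∧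
  y 0 = 1 ∧ MomMatPSD d y

/-- The (P3) objective `Σ_α y_α (g)_α`. -/
def P3obj {m : ℕ} (g : MvPolynomial (Fin m) ℝ) (y : (Fin m →₀ ℕ) → ℝ) : ℝ :=
  ∑ α ∈ g.support, coeff α g * y α

/-!
Evaluating monomials at a point of the projected spectrahedron gives a feasible point of (P3) with
the same objective value, so the minimum of (P3) is at most `g v` for every feasible `v`.
Conversely, the Riesz functional `L` of a feasible `y` satisfies Jensen's inequality
`g (L X) ≤ L g`: with `a = L X`, the function `φ t = L (g (a + t (X - a)))` has `φ 0 = g a`,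
`φ 1 = L g` and `φ' 0 = 0`, and it is convex. Indeed, SOS-convexity writes `φ'' t` as `L` of a sum
of squares of degree at most `d`; leading terms of squares cannot cancel, so `L` is nonnegative on
each summand by positivity of the moment matrix.
-/

section TotalDegree

variable {σ τ R : Type*}

lemma totalDegree_aeval_le [CommSemiring R] {f : σ → MvPolynomial τ R} {n : ℕ}
    (hf : ∀ i, (f i).totalDegree ≤ n) (p : MvPolynomial σ R) :
    (aeval f p).totalDegree ≤ p.totalDegree * n := by
  rw [aeval_def, eval₂_eq]
  refine totalDegree_finsetSum_le fun α hα => ?_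
  calc (algebraMap R (MvPolynomial τ R) (coeff α p) * ∏ i ∈ α.support, f i ^ α i).totalDegree
      ≤ 0 + ∑ i ∈ α.support, (f i ^ α i).totalDegree := by
        grw [totalDegree_mul, totalDegree_finsetProd, algebraMap_eq, totalDegree_C]
    _ ≤ ∑ i ∈ α.support, α i * n := by
        rw [zero_add]
        gcongr with i
        exact (totalDegree_pow _ _).trans (Nat.mul_le_mul_left _ (hf i))
    _ = (α.sum fun _ e => e) * n := (Finset.sum_mul ..).symm
    _ ≤ p.totalDegree * n := Nat.mul_le_mul_right n (le_totalDegree hα)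

lemma totalDegree_X_sub_C_le [CommRing R] (i : σ) (r : R) :
    (X i - C r : MvPolynomial σ R).totalDegree ≤ 1 :=
  (totalDegree_sub_C_le _ _).trans <| (totalDegree_monomial_le _ _).trans_eq <|
    Finsupp.sum_single_index rfl

lemma totalDegree_pderiv_lt [CommSemiring R] {i : σ} {p : MvPolynomial σ R}
    (h : pderiv i p ≠ 0) : (pderiv i p).totalDegree < p.totalDegree := by
  have hlt : ∀ α ∈ (pderiv i p).support, (α.sum fun _ e => e) < p.totalDegree := by
    intro α hα
    have hmem : α + Finsupp.single i 1 ∈ p.support := by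
      rw [mem_support_iff, coeff_pderiv] at hα
      exact mem_support_iff.2 (left_ne_zero_of_mul hα)
    have hle := le_totalDegree hmem
    rw [Finsupp.sum_add_index' (fun _ => rfl) (fun _ _ _ => rfl),
      Finsupp.sum_single_index rfl] at hle
    exact hle
  obtain ⟨α, hα⟩ := support_nonempty.2 h
  exact (Finset.sup_lt_iff (Nat.zero_lt_of_lt (hlt α hα))).2 hlt

lemma two_mul_totalDegree_le_totalDegree_sum_sq [CommRing R] [LinearOrder R]
    [IsStrictOrderedRing R] [LinearOrder σ] [WellFoundedGT σ] {ι : Type*} {s : Finset ι}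
    (q : ι → MvPolynomial σ R) {k : ι} (hk : k ∈ s) :
    2 * (q k).totalDegree ≤ (∑ i ∈ s, q i ^ 2).totalDegree := by
  let o : MonomialOrder σ := .degLex
  obtain ⟨j, hj, hmax⟩ := s.exists_max_image (fun i => o.toSyn (o.degree (q i))) ⟨k, hk⟩
  have hkj : (q k).totalDegree ≤ (q j).totalDegree := degLex_totalDegree_monotone (hmax k hk)
  by_cases hj0 : q j = 0
  · simp_all
  set δ := o.degree (q j)
  have hcoeff : coeff (δ + δ) (∑ i ∈ s, q i ^ 2) = ∑ i ∈ s, coeff δ (q i) ^ 2 := by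
    rw [coeff_sum]
    refine Finset.sum_congr rfl fun i hi => ?_
    rw [sq, o.coeff_mul_of_add_of_degree_le (hmax i hi) (hmax i hi), sq]
  have hpos : 0 < ∑ i ∈ s, coeff δ (q i) ^ 2 :=
    Finset.sum_pos' (fun _ _ => sq_nonneg _)
      ⟨j, hj, sq_pos_of_ne_zero (o.leadingCoeff_ne_zero_iff.2 hj0)⟩
  have hδ : δ.degree = (q j).totalDegree := degree_degLexDegree
  have hle : (δ + δ).degree ≤ (∑ i ∈ s, q i ^ 2).totalDegree :=
    le_totalDegree (mem_support_iff.2 (hcoeff ▸ hpos.ne'))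
  rw [map_add] at hle
  omega

end TotalDegree

section Homothety

variable {σ R : Type*} [CommRing R]

/-- The substitution `p ↦ p (a + t (X - a))`, which moves from evaluation at `a` (at `t = 0`) to the
identity (at `t = 1`). -/
def homothetySubst (a : σ → R) (t : R) : MvPolynomial σ R →ₐ[R] MvPolynomial σ R :=
  aeval fun i => C (a i) + t • (X i - C (a i))

@[simp]
lemma homothetySubst_zero (a : σ → R) (p : MvPolynomial σ R) :
    homothetySubst a 0 p = C (eval a p) := by
  induction p using MvPolynomial.induction_on <;> simp_all [homothetySubst, algebraMap_eq]

@[simp]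
lemma homothetySubst_one (a : σ → R) (p : MvPolynomial σ R) : homothetySubst a 1 p = p := by
  simp [homothetySubst]

lemma totalDegree_homothetySubst_le (a : σ → R) (t : R) (p : MvPolynomial σ R) :
    (homothetySubst a t p).totalDegree ≤ p.totalDegree := by
  refine (totalDegree_aeval_le (n := 1) (fun i => ?_) p).trans_eq (mul_one _)
  refine (totalDegree_add _ _).trans (max_le (by simp) ?_)
  exact (totalDegree_smul_le _ _).trans (totalDegree_X_sub_C_le i (a i))

variable [Fintype σ]

/-- The operator `p ↦ ∑ i, T (∂ᵢ p) * (Xᵢ - aᵢ)`. For `T = homothetySubst a t` this is the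
derivative of `T` in `t`, and iterating the construction gives the higher derivatives. -/
def radialDeriv (a : σ → R) (T : MvPolynomial σ R →ₗ[R] MvPolynomial σ R) :
    MvPolynomial σ R →ₗ[R] MvPolynomial σ R :=
  ∑ i, LinearMap.mulRight R (X i - C (a i)) ∘ₗ T ∘ₗ (pderiv i).toLinearMap

lemma radialDeriv_apply (a : σ → R) (T : MvPolynomial σ R →ₗ[R] MvPolynomial σ R)
    (p : MvPolynomial σ R) :
    radialDeriv a T p = ∑ i, T (pderiv i p) * (X i - C (a i)) := by
  simp [radialDeriv]

lemma totalDegree_radialDeriv_le (a : σ → R) {T : MvPolynomial σ R →ₗ[R] MvPolynomial σ R}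
    (hT : ∀ q, (T q).totalDegree ≤ q.totalDegree) (p : MvPolynomial σ R) :
    (radialDeriv a T p).totalDegree ≤ p.totalDegree := by
  rw [radialDeriv_apply]
  refine totalDegree_finsetSum_le fun i _ => ?_
  by_cases hi : pderiv i p = 0
  · simp [hi]
  calc (T (pderiv i p) * (X i - C (a i))).totalDegree
      ≤ (pderiv i p).totalDegree + 1 :=
        (totalDegree_mul _ _).trans (add_le_add (hT _) (totalDegree_X_sub_C_le i (a i)))
    _ ≤ p.totalDegree := totalDegree_pderiv_lt hi

lemma radialDeriv_mul_X (a : σ → R) (φ : MvPolynomial σ R →ₐ[R] MvPolynomial σ R)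
    (p : MvPolynomial σ R) (j : σ) :
    radialDeriv a φ.toLinearMap (p * X j) =
      radialDeriv a φ.toLinearMap p * φ (X j) + φ p * (X j - C (a j)) := by
  classical
  have hterm : ∀ i, φ (pderiv i (p * X j)) * (X i - C (a i)) =
      φ (pderiv i p) * (X i - C (a i)) * φ (X j) +
        if i = j then φ p * (X i - C (a i)) else 0 := by
    intro i
    obtain rfl | hij := eq_or_ne i j
    · rw [pderiv_mul, pderiv_X_self, map_add, map_mul, mul_one, if_pos rfl]
      ring
    · rw [pderiv_mul, pderiv_X_of_ne hij.symm, mul_zero, add_zero, map_mul, if_neg hij]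
      ring
  simp only [radialDeriv_apply, AlgHom.toLinearMap_apply, hterm, Finset.sum_add_distrib,
    Finset.sum_mul, Finset.sum_ite_eq', Finset.mem_univ, if_true]

end Homothety

section Derivatives

variable {σ 𝕜 E : Type*} [Fintype σ] [NontriviallyNormedField 𝕜] [NormedAddCommGroup E]
  [NormedSpace 𝕜 E]

lemma hasDerivAt_homothetySubst (a : σ → 𝕜) (L : MvPolynomial σ 𝕜 →ₗ[𝕜] E)
    (p : MvPolynomial σ 𝕜) (t : 𝕜) :
    HasDerivAt (fun t => L (homothetySubst a t p))
      (L (radialDeriv a (homothetySubst a t).toLinearMap p)) t := by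
  induction p using MvPolynomial.induction_on generalizing L with
  | C r => simpa [radialDeriv_apply, homothetySubst] using hasDerivAt_const t _
  | add p q hp hq => simpa only [map_add] using (hp L).fun_add (hq L)
  | mul_X p j hp =>
    -- `L (· * (aⱼ + t (Xⱼ - aⱼ)))` is affine in `t` with linear functionals as coefficients, so the
    -- induction hypothesis has to hold for all functionals at once.
    let K := L ∘ₗ LinearMap.mulRight 𝕜 (X j - C (a j))
    have hX : ∀ s q, L (q * homothetySubst a s (X j)) = a j • L q + s • K q := by
      intro s q
      simp [homothetySubst, K, mul_add, mul_comm q (C _), C_mul']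
    simp only [radialDeriv_mul_X, map_mul, map_add, hX]
    refine (((hp L).const_smul (a j)).add ((hasDerivAt_id t).smul (hp K))).congr_deriv ?_
    simp [K, add_assoc]

lemma hasDerivAt_radialDeriv_homothetySubst (a : σ → 𝕜) (L : MvPolynomial σ 𝕜 →ₗ[𝕜] E)
    (p : MvPolynomial σ 𝕜) (t : 𝕜) :
    HasDerivAt (fun t => L (radialDeriv a (homothetySubst a t).toLinearMap p))
      (L (radialDeriv a (radialDeriv a (homothetySubst a t).toLinearMap) p)) t := by
  simp only [radialDeriv_apply _ _ p, map_sum]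
  exact HasDerivAt.fun_sum fun i _ =>
    hasDerivAt_homothetySubst a (L ∘ₗ LinearMap.mulRight 𝕜 (X i - C (a i))) (pderiv i p) t

end Derivatives

section Jensen

variable {m : ℕ} {g : MvPolynomial (Fin m) ℝ}

lemma radialDeriv_radialDeriv_eq_sum_sq {s : ℕ}
    {P : Matrix (Fin s) (Fin m) (MvPolynomial (Fin m) ℝ)} (hP : polyHessian g = Pᵀ * P)
    (a : Fin m → ℝ) (φ : MvPolynomial (Fin m) ℝ →ₐ[ℝ] MvPolynomial (Fin m) ℝ) :
    radialDeriv a (radialDeriv a φ.toLinearMap) g =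
      ∑ k, (∑ i, φ (P k i) * (X i - C (a i))) ^ 2 := by
  have hHess : ∀ i j, pderiv i (pderiv j g) = ∑ k, P k i * P k j := fun i j => by
    simpa [polyHessian, Matrix.mul_apply] using congrFun₂ hP i j
  calc radialDeriv a (radialDeriv a φ.toLinearMap) g
      = ∑ j, ∑ i, ∑ k, φ (P k i) * (X i - C (a i)) * (φ (P k j) * (X j - C (a j))) := by
        simp only [radialDeriv_apply, AlgHom.toLinearMap_apply, hHess, map_sum, map_mul,
          Finset.sum_mul]
        congr! 3
        ring
    _ = ∑ k, ∑ i, ∑ j, φ (P k i) * (X i - C (a i)) * (φ (P k j) * (X j - C (a j))) := by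
        rw [Finset.sum_comm]
        simp_rw [Finset.sum_comm (s := Finset.univ (α := Fin m)) (t := Finset.univ (α := Fin s))]
    _ = ∑ k, (∑ i, φ (P k i) * (X i - C (a i))) ^ 2 := by
        simp only [sq, Finset.sum_mul_sum]

lemma IsSOSConvex.map_radialDeriv_radialDeriv_nonneg (hg : IsSOSConvex g)
    {L : MvPolynomial (Fin m) ℝ →ₗ[ℝ] ℝ}
    (hL : ∀ q, 2 * q.totalDegree ≤ g.totalDegree → 0 ≤ L (q ^ 2)) (a : Fin m → ℝ) (t : ℝ) :
    0 ≤ L (radialDeriv a (radialDeriv a (homothetySubst a t).toLinearMap) g) := by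
  obtain ⟨s, P, hP⟩ := hg
  have hdeg := totalDegree_radialDeriv_le a
    (totalDegree_radialDeriv_le a (T := (homothetySubst a t).toLinearMap)
      (totalDegree_homothetySubst_le a t)) g
  rw [radialDeriv_radialDeriv_eq_sum_sq hP] at hdeg ⊢
  rw [map_sum]
  exact Finset.sum_nonneg fun k hk =>
    hL _ ((two_mul_totalDegree_le_totalDegree_sum_sq _ hk).trans hdeg)

theorem IsSOSConvex.eval_map_X_le_map (hg : IsSOSConvex g)
    {L : MvPolynomial (Fin m) ℝ →ₗ[ℝ] ℝ} (hL1 : L 1 = 1)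
    (hL : ∀ q, 2 * q.totalDegree ≤ g.totalDegree → 0 ≤ L (q ^ 2)) :
    eval (fun i => L (X i)) g ≤ L g := by
  set a : Fin m → ℝ := fun i => L (X i)
  have hLC : ∀ r, L (C r) = r := fun r => by
    rw [← mul_one (C r), C_mul', map_smul, hL1, smul_eq_mul, mul_one]
  let φ (t : ℝ) : ℝ := L (homothetySubst a t g)
  have hconvex : ConvexOn ℝ Set.univ φ :=
    convexOn_of_hasDerivWithinAt2_nonneg convex_univ
      (fun t _ => (hasDerivAt_homothetySubst a L g t).continuousAt.continuousWithinAt)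
      (fun t _ => (hasDerivAt_homothetySubst a L g t).hasDerivWithinAt)
      (fun t _ => (hasDerivAt_radialDeriv_homothetySubst a L g t).hasDerivWithinAt)
      (fun t _ => hg.map_radialDeriv_radialDeriv_nonneg hL a t)
  have hφ' : HasDerivAt φ 0 0 := by
    refine (hasDerivAt_homothetySubst a L g 0).congr_deriv ?_
    simp [radialDeriv_apply, C_mul', hLC, a]
  have hslope := hconvex.le_slope_of_hasDerivAt trivial trivial zero_lt_one hφ'
  simpa [slope_def_field, φ, hLC] using hslope

end Jensen

section Moments

variable {σ R : Type*} [CommSemiring R]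

/-- The Riesz functional `∑ α, p_α X^α ↦ ∑ α, p_α y_α` of a moment sequence `y`. -/
def riesz (y : (σ →₀ ℕ) → R) : MvPolynomial σ R →ₗ[R] R :=
  (basisMonomials σ R).constr R y

@[simp]
lemma riesz_monomial (y : (σ →₀ ℕ) → R) (α : σ →₀ ℕ) (c : R) :
    riesz y (monomial α c) = c * y α := by
  have hα : riesz y (monomial α 1) = y α := (basisMonomials σ R).constr_basis R y α
  rw [← mul_one c, ← smul_eq_mul, ← smul_monomial, map_smul, hα, smul_eq_mul, smul_eq_mul, mul_one]

lemma riesz_sq (y : (σ →₀ ℕ) → R) (q : MvPolynomial σ R) :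
    riesz y (q ^ 2) =
      ∑ β ∈ q.support, ∑ γ ∈ q.support, coeff β q * coeff γ q * y (β + γ) := by
  conv_lhs => rw [sq, q.as_sum, Finset.sum_mul_sum]
  simp only [map_sum, monomial_mul, riesz_monomial]

/-- The moments of the Dirac measure at `v`. -/
def pointMoments (v : σ → R) (α : σ →₀ ℕ) : R :=
  eval v (monomial α 1)

lemma riesz_pointMoments (v : σ → R) (p : MvPolynomial σ R) :
    riesz (pointMoments v) p = eval v p := by
  induction p using MvPolynomial.induction_on' with
  | monomial α c => simp [pointMoments, eval_monomial]
  | add p q hp hq => rw [map_add, map_add, hp, hq]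

end Moments

section Relaxation

variable {m N ν d : ℕ} {F0 : Matrix (Fin ν) (Fin ν) ℝ} {F : Fin m → Matrix (Fin ν) (Fin ν) ℝ}
  {M : Fin N → Matrix (Fin ν) (Fin ν) ℝ}

lemma P3obj_eq_riesz (g : MvPolynomial (Fin m) ℝ) (y : (Fin m →₀ ℕ) → ℝ) :
    P3obj g y = riesz y g := by
  conv_rhs => rw [g.as_sum]
  simp only [P3obj, map_sum, riesz_monomial]

lemma momMatPSD_iff_riesz_sq_nonneg {y : (Fin m →₀ ℕ) → ℝ} :
    MomMatPSD d y ↔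
      ∀ q : MvPolynomial (Fin m) ℝ, q.totalDegree ≤ d / 2 → 0 ≤ riesz y (q ^ 2) := by
  -- `repr` is definitionally the identity, so the vector `c` in `MomMatPSD` is the polynomial `q`.
  rw [MomMatPSD, (basisMonomials (Fin m) ℝ).repr.surjective.forall]
  refine forall_congr' fun q => ?_
  rw [riesz_sq]
  exact imp_congr_left Finset.sup_le_iff.symm

lemma MomMatPSD.eval_le_P3obj {g : MvPolynomial (Fin m) ℝ} (hg : IsSOSConvex g)
    (hdeg : g.totalDegree ≤ d) {y : (Fin m →₀ ℕ) → ℝ} (hy0 : y 0 = 1) (hy : MomMatPSD d y) :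
    eval (fun i => y (Finsupp.single i 1)) g ≤ P3obj g y := by
  have hX : ∀ i, riesz y (X i) = y (Finsupp.single i 1) := fun i => by simp [X]
  have h1 : riesz y 1 = 1 := by rw [← C_1, C_apply, riesz_monomial, hy0, mul_one]
  simp_rw [P3obj_eq_riesz, ← hX]
  exact hg.eval_map_X_le_map h1 fun q hq => momMatPSD_iff_riesz_sq_nonneg.1 hy q (by omega)

lemma momMatPSD_pointMoments (v : Fin m → ℝ) : MomMatPSD d (pointMoments v) := by
  rw [momMatPSD_iff_riesz_sq_nonneg]
  intro q _
  rw [riesz_pointMoments, map_pow]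
  exact sq_nonneg _

lemma exists_P3Feasible_pointMoments {v : Fin m → ℝ} (hv : v ∈ projSpec F0 F M) :
    ∃ ξ, P3Feasible F0 F M d (pointMoments v) ξ := by
  obtain ⟨ξ, hξ⟩ := hv
  refine ⟨ξ, ?_, ?_, momMatPSD_pointMoments v⟩
  · simpa [pointMoments, eval_monomial] using hξ
  · simp [pointMoments]

end Relaxation

theorem recover_poly_opt_minimizer_general {m N ν d : ℕ}
    {F0 : Matrix (Fin ν) (Fin ν) ℝ} {F : Fin m → Matrix (Fin ν) (Fin ν) ℝ}
    {M : Fin N → Matrix (Fin ν) (Fin ν) ℝ}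
    {g : MvPolynomial (Fin m) ℝ} (hg : IsSOSConvex g) (hdeg : g.totalDegree ≤ d)
    {ybar : (Fin m →₀ ℕ) → ℝ} {ξbar : Fin N → ℝ} (hfeas : P3Feasible F0 F M d ybar ξbar)
    (hminP3 : ∀ y ξ, P3Feasible F0 F M d y ξ → P3obj g ybar ≤ P3obj g y) :
    (fun i => ybar (Finsupp.single i 1)) ∈ projSpec F0 F M ∧
    ∀ v ∈ projSpec F0 F M,
      eval (fun i => ybar (Finsupp.single i 1)) g ≤ eval v g := by
  obtain ⟨hpsd, hy0, hy⟩ := hfeas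
  refine ⟨⟨ξbar, hpsd⟩, fun v hv => ?_⟩
  obtain ⟨ξ, hξ⟩ := exists_P3Feasible_pointMoments hv
  calc eval (fun i => ybar (Finsupp.single i 1)) g
      ≤ P3obj g ybar := hy.eval_le_P3obj hg hdeg hy0
    _ ≤ P3obj g (pointMoments v) := hminP3 _ ξ hξ
    _ = eval v g := by rw [P3obj_eq_riesz, riesz_pointMoments]

/-- Recovering a minimizer of an SOS-convex polynomial
optimization problem over a projected spectrahedron from its dual SDP. -/
theorem recover_poly_opt_minimizer {m N ν : ℕ}
    (F0 : Matrix (Fin ν) (Fin ν) ℝ) (F : Fin m → Matrix (Fin ν) (Fin ν) ℝ)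
    (M : Fin N → Matrix (Fin ν) (Fin ν) ℝ)
    (hF0 : F0.IsSymm) (hF : ∀ i, (F i).IsSymm) (hM : ∀ t, (M t).IsSymm)
    (g : MvPolynomial (Fin m) ℝ) (hg : IsSOSConvex g)
    (d : ℕ) (hdeven : Even d) (hdeg : g.totalDegree ≤ d)
    (hcompact : IsCompact (projSpec F0 F M))
    (hslater : ∃ (vbar : Fin m → ℝ) (ξbar : Fin N → ℝ),
      (F0 + ∑ i, vbar i • F i + ∑ t, ξbar t • M t).PosDef)
    (hstrong : ∃ c, IsGreatest (P2vals F0 F M g d) c ∧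
      IsLeast {val | ∃ y ξ, P3Feasible F0 F M d y ξ ∧ val = P3obj g y} c)
    (ybar : (Fin m →₀ ℕ) → ℝ) (ξbar : Fin N → ℝ)
    (hfeas : P3Feasible F0 F M d ybar ξbar)
    (hminP3 : ∀ y ξ, P3Feasible F0 F M d y ξ → P3obj g ybar ≤ P3obj g y) :
    (fun i => ybar (Finsupp.single i 1)) ∈ projSpec F0 F M ∧
    ∀ v ∈ projSpec F0 F M,
      eval (fun i => ybar (Finsupp.single i 1)) g ≤ eval v g :=
  recover_poly_opt_minimizer_general hg hdeg hfeas hminP3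

end
end
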